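/- Suppose at least one of the following holds: there exists x ∈ K with σ₁(σ₃(x)) ≠ x; or σ₂ ∘ σ₄ ≠ id; or for every v ∈ K there exists x ∈ K with σ₃(c)·σ₃(σ₁(x))·σ₃(σ₂(v)) ≠ x·σ₄(c)·σ₄(σ₁(v)). Then an element (k,m) of Cay(K,c,σ₁,σ₂,σ₃,σ₄) lies in the middle nucleus (i.e., (z·(k,m))·w = z·((k,m)·w) for all z, w in the algebra) if and only if m = 0 and σ₃⁻¹(σ₂⁻¹(σ₁(σ₄(k)))) = k; that is, the middle nucleus equals Fix(σ₃⁻¹ ∘ σ₂⁻¹ ∘ σ₁ ∘ σ₄) × {0}. -/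

import Mathlib

/-- Multiplication of the generalized Cayley–Dickson double
`Cay(K, c, σ₁, σ₂, σ₃, σ₄)`:
`(u,v)·(x,y) = (u·x + c·σ₁(v)·σ₂(y), σ₃(u)·y + v·σ₄(x))`. -/
def cayMul {R : Type*} [Ring R] (c : R) (σ₁ σ₂ σ₃ σ₄ : R → R) :
    R × R → R × R → R × R :=
  fun p q => (p.1 * q.1 + c * σ₁ p.2 * σ₂ q.2, σ₃ p.1 * q.2 + p.2 * σ₄ q.1)

/-- Under one of the listed hypotheses, the middle nucleus of
`Cay(K,c,σ₁,σ₂,σ₃,σ₄)` is `Fix(σ₃⁻¹∘σ₂⁻¹∘σ₁∘σ₄) × {0}`. -/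
theorem cay_field_middle_nucleus
    {F K : Type*} [Field F] [Field K] [Algebra F K] [FiniteDimensional F K]
    (σ₁ σ₂ σ₃ σ₄ : K ≃ₐ[F] K) (c : K) (hc : c ≠ 0)
    (h : (∃ x : K, σ₁ (σ₃ x) ≠ x) ∨ (⇑σ₂ ∘ ⇑σ₄ ≠ id) ∨
      (∀ v : K, ∃ x : K, σ₃ c * σ₃ (σ₁ x) * σ₃ (σ₂ v) ≠ x * σ₄ c * σ₄ (σ₁ v)))
    (k m : K) :
    (∀ z w : K × K,
        cayMul c σ₁ σ₂ σ₃ σ₄ (cayMul c σ₁ σ₂ σ₃ σ₄ z (k, m)) w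
          = cayMul c σ₁ σ₂ σ₃ σ₄ z (cayMul c σ₁ σ₂ σ₃ σ₄ (k, m) w)) ↔
      (m = 0 ∧ σ₃.symm (σ₂.symm (σ₁ (σ₄ k))) = k) := by
  constructor
  · intro H
    have hm : m = 0 := by
      by_contra hm
      have h1m : σ₁ m ≠ 0 := by simpa using hm
      have h2m : σ₂ m ≠ 0 := by simpa using hm
      rcases h with ⟨x, hx⟩ | h | h
      · have e := congrArg Prod.fst (H (x, 0) (0, 1))
        simp [cayMul] at e
        apply hx
        have e2 : (c * σ₁ m) * σ₁ (σ₃ x) = (c * σ₁ m) * x := by linear_combination e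
        exact mul_left_cancel₀ (mul_ne_zero hc h1m) e2
      · apply h
        funext x
        have e := congrArg Prod.fst (H (0, 1) (x, 0))
        simp only [cayMul, map_zero, map_one, map_mul, map_add] at e
        have e2 : (c * σ₂ m) * σ₂ (σ₄ x) = (c * σ₂ m) * x := by linear_combination -e
        exact mul_left_cancel₀ (mul_ne_zero hc h2m) e2
      · obtain ⟨x, hx⟩ := h 0
        simp at hx
    refine ⟨hm, ?_⟩
    subst hm
    have e := congrArg Prod.fst (H (0, 1) (0, 1))
    simp only [cayMul, map_zero, map_one, map_mul, map_add] at e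
    have e2 : c * σ₁ (σ₄ k) = c * σ₂ (σ₃ k) := by linear_combination e
    rw [mul_left_cancel₀ hc e2]
    simp
  · rintro ⟨rfl, hk⟩ ⟨a, b⟩ ⟨x, y⟩
    have e : σ₁ (σ₄ k) = σ₂ (σ₃ k) := by
      rw [AlgEquiv.symm_apply_eq, AlgEquiv.symm_apply_eq] at hk
      exact hk
    ext
    · simp only [cayMul, map_zero, map_mul, map_add]
      linear_combination c * σ₁ b * σ₂ y * e
    · simp only [cayMul, map_zero, map_mul, map_add]
      ring
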